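/- Let γ_{n,i,j} be the number of σ ∈ Q_n with lap(σ) = i, dasc(σ) = j and dp(σ) = 0 (set to 0 when an index is negative). Then for all n ≥ 1 and all integers i, j ≥ 0, γ_{n+1,i,j} = i·γ_{n,i,j−1} + 2(j+1)·γ_{n,i−1,j+1} + (2n+3−2i−j)·γ_{n,i−1,j}, as an identity of integers, with initial conditions γ_{1,1,0} = 1 and γ_{1,i,j} = 0 for (i,j) ≠ (1,0). -/

import Mathlib

open Finset MvPolynomial

/-- Stirling permutations of order `n`, encoded as functions `Fin (2*n) → Fin (n+1)`
in one-line notation (position `i` holds the letter `σ (i) ∈ {1,…,n}`), such that each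
letter `1,…,n` occurs exactly twice and all entries between the two occurrences of a
letter are larger than that letter. -/
def StirlingSet (n : ℕ) : Finset (Fin (2*n) → Fin (n+1)) :=
  Finset.univ.filter (fun σ =>
    (∀ v : Fin (n+1), (v : ℕ) ≠ 0 →
        (Finset.univ.filter (fun i => σ i = v)).card = 2) ∧
    (∀ i j k : Fin (2*n), i < j → j < k → σ i = σ k → σ i < σ j))

/-- The letter at position `i ∈ {1,…,2n}` of a Stirling permutation, with the
convention that positions outside this range (in particular position `0`) hold `0`. -/
def sval {n : ℕ} (σ : Fin (2*n) → Fin (n+1)) (i : ℕ) : ℕ :=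
  if h : 1 ≤ i ∧ i ≤ 2*n then (σ ⟨i - 1, by omega⟩ : ℕ) else 0

/-- The number of ascent-plateaus: indices `2 ≤ i ≤ 2n-1` with `σ_{i-1} < σ_i = σ_{i+1}`. -/
def apQ {n : ℕ} (σ : Fin (2*n) → Fin (n+1)) : ℕ :=
  ((Finset.Icc 2 (2*n - 1)).filter
    (fun i => sval σ (i-1) < sval σ i ∧ sval σ i = sval σ (i+1))).card

/-- The number of left ascent-plateaus: indices `1 ≤ i ≤ 2n-1` with
`σ_{i-1} < σ_i = σ_{i+1}`, where `σ_0 = 0`. -/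
def lapQ {n : ℕ} (σ : Fin (2*n) → Fin (n+1)) : ℕ :=
  ((Finset.Icc 1 (2*n - 1)).filter
    (fun i => sval σ (i-1) < sval σ i ∧ sval σ i = sval σ (i+1))).card

/-- The number of double ascents: indices `1 ≤ i ≤ 2n-1` with
`σ_{i-1} < σ_i < σ_{i+1}`, where `σ_0 = 0`. -/
def dascQ {n : ℕ} (σ : Fin (2*n) → Fin (n+1)) : ℕ :=
  ((Finset.Icc 1 (2*n - 1)).filter
    (fun i => sval σ (i-1) < sval σ i ∧ sval σ i < sval σ (i+1))).card

/-- The number of descent-plateaus: indices `2 ≤ i ≤ 2n-1` with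
`σ_{i-1} > σ_i = σ_{i+1}`. -/
def dpQ {n : ℕ} (σ : Fin (2*n) → Fin (n+1)) : ℕ :=
  ((Finset.Icc 2 (2*n - 1)).filter
    (fun i => sval σ i < sval σ (i-1) ∧ sval σ i = sval σ (i+1))).card

/-- The number of ascents: indices `1 ≤ i ≤ 2n-1` with `σ_i < σ_{i+1}` or `i = 1`. -/
def ascQ {n : ℕ} (σ : Fin (2*n) → Fin (n+1)) : ℕ :=
  ((Finset.Icc 1 (2*n - 1)).filter
    (fun i => sval σ i < sval σ (i+1) ∨ i = 1)).card

/-- The number of plateaus: indices `1 ≤ i ≤ 2n-1` with `σ_i = σ_{i+1}`. -/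
def platQ {n : ℕ} (σ : Fin (2*n) → Fin (n+1)) : ℕ :=
  ((Finset.Icc 1 (2*n - 1)).filter (fun i => sval σ i = sval σ (i+1))).card

/-- The flag ascent-plateau number: `2·ap(σ)+1` if `σ_1 = σ_2`, and `2·ap(σ)` otherwise. -/
def fapQ {n : ℕ} (σ : Fin (2*n) → Fin (n+1)) : ℕ :=
  if 1 ≤ n ∧ sval σ 1 = sval σ 2 then 2 * apQ σ + 1 else 2 * apQ σ

/-- `γ_{n,i,j}`: the number of Stirling permutations of order `n` with `lap = i`,
`dasc = j` and `dp = 0`, extended by `0` when an index is negative. -/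
def gammaZ (n : ℕ) (i j : ℤ) : ℤ :=
  if 0 ≤ i ∧ 0 ≤ j then
    ((StirlingSet n).filter
      (fun σ => (lapQ σ : ℤ) = i ∧ (dascQ σ : ℤ) = j ∧ dpQ σ = 0)).card
  else 0

/-!
Deleting the two copies of the largest letter, which are adjacent, shows that every Stirling
permutation of order `n + 1` arises exactly once from one of order `n` by inserting the pair
`(n+1)(n+1)` into one of its `2n + 1` slots. Write `x`, `y` for the letters around the slot. The
insertion creates a left ascent-plateau, and in addition
* in front of a left ascent-plateau `x < y = y` it turns this one into a descent-plateau;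
* in the middle of a left ascent-plateau `· < x = x` it turns this one into a double ascent;
* in front of a double ascent `x < y < ·` it destroys this double ascent;
* in the middle of a descent-plateau `· > x = x` it destroys this descent-plateau;
* in every other slot it changes nothing.
Counting the slots of each kind gives a recurrence for the number `N(n; i, j, k)` of Stirling
permutations with `lap = i`, `dasc = j` and `dp = k`. By induction this recurrence yields
`(k + 1) N(n; i, j, k + 1) = (j + 1) N(n; i, j + 1, k)`; at `k = 0` this exchange rule expresses
the only term with a descent-plateau in the recurrence through `γ`.
-/

/-! ### Stirling permutations as words -/

/-- The one-line notation of a Stirling permutation of order `n`: its letters stand at the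
positions `1, …, 2n` and all other positions hold `0`, so that the padding `σ_0 = 0` is part of
the word. -/
structure IsStirlingWord (n : ℕ) (f : ℕ → ℕ) : Prop where
  pos_iff : ∀ t, 0 < f t ↔ 1 ≤ t ∧ t ≤ 2 * n
  le : ∀ t, f t ≤ n
  exists_fiber : ∀ v, 1 ≤ v → v ≤ n → ∃ i j, i < j ∧ ∀ t, f t = v ↔ t = i ∨ t = j
  lt_between : ∀ i j k, i < j → j < k → f i = f k → 0 < f i → f i < f j

section sval

variable {n : ℕ} {σ : Fin (2 * n) → Fin (n + 1)}

lemma sval_succ (σ : Fin (2 * n) → Fin (n + 1)) (i : Fin (2 * n)) : sval σ (i + 1) = σ i := by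
  have := i.2
  simp [sval]

lemma sval_le (σ : Fin (2 * n) → Fin (n + 1)) (t : ℕ) : sval σ t ≤ n := by
  unfold sval
  split_ifs
  · exact Fin.is_le _
  · exact n.zero_le

lemma sval_injective (n : ℕ) :
    Function.Injective (sval : (Fin (2 * n) → Fin (n + 1)) → ℕ → ℕ) := by
  intro σ τ h
  funext i
  apply Fin.ext
  rw [← sval_succ, ← sval_succ, h]

lemma exists_eq_succ_of_sval_pos {t : ℕ} (ht : 0 < sval σ t) :
    ∃ i : Fin (2 * n), t = i + 1 := by
  have hrange : 1 ≤ t ∧ t ≤ 2 * n := by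
    by_contra h
    simp [sval, h] at ht
  exact ⟨⟨t - 1, by omega⟩, by simp only; omega⟩

lemma ne_zero_of_mem_stirlingSet (hσ : σ ∈ StirlingSet n) (i : Fin (2 * n)) : σ i ≠ 0 := by
  have hcard : ∀ v : Fin n, #{i | σ i = v.succ} = 2 :=
    fun v => (mem_filter.1 hσ).2.1 v.succ (by simp)
  have htotal : 2 * n = ∑ v, #{i | σ i = v} := by
    simpa using card_eq_sum_card_fiberwise (f := σ) (s := univ) (t := univ) (by simp)
  have hzero : #{i | σ i = 0} = 0 := by
    rw [Fin.sum_univ_succ, sum_congr rfl fun v _ => hcard v] at htotal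
    simp only [sum_const, card_univ, Fintype.card_fin, smul_eq_mul] at htotal
    omega
  exact filter_eq_empty_iff.1 (card_eq_zero.1 hzero) (mem_univ i)

lemma sval_pos_iff (hσ : σ ∈ StirlingSet n) (t : ℕ) : 0 < sval σ t ↔ 1 ≤ t ∧ t ≤ 2 * n := by
  constructor
  · intro ht
    obtain ⟨i, rfl⟩ := exists_eq_succ_of_sval_pos ht
    omega
  · rintro ⟨h1, h2⟩
    obtain ⟨s, rfl⟩ := Nat.exists_eq_add_of_le' h1
    rw [sval_succ σ ⟨s, h2⟩]
    exact Fin.pos_iff_ne_zero.2 (ne_zero_of_mem_stirlingSet hσ _)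

lemma exists_fiber_sval (hσ : σ ∈ StirlingSet n) {v : ℕ} (hv : 1 ≤ v) (hvn : v ≤ n) :
    ∃ i j, i < j ∧ ∀ t, sval σ t = v ↔ t = i ∨ t = j := by
  obtain ⟨x, y, hxy, hfiber⟩ := card_eq_two.1
    ((mem_filter.1 hσ).2.1 ⟨v, Nat.lt_succ_of_le hvn⟩ (Nat.ne_of_gt hv))
  have hσv : ∀ i, (σ i : ℕ) = v ↔ i = x ∨ i = y := by
    intro i
    simpa [Fin.ext_iff] using Finset.ext_iff.1 hfiber i
  have hsval : ∀ t, sval σ t = v ↔ t = x + 1 ∨ t = y + 1 := by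
    intro t
    constructor
    · intro ht
      obtain ⟨i, rfl⟩ := exists_eq_succ_of_sval_pos (σ := σ) (t := t) (by omega)
      rw [sval_succ, hσv] at ht
      simpa [Fin.ext_iff] using ht
    · rintro (rfl | rfl) <;> simp [sval_succ, hσv]
  rcases lt_or_gt_of_ne hxy with h | h
  · exact ⟨x + 1, y + 1, by simpa using h, hsval⟩
  · exact ⟨y + 1, x + 1, by simpa using h, fun t => (hsval t).trans or_comm⟩

lemma isStirlingWord_sval (hσ : σ ∈ StirlingSet n) : IsStirlingWord n (sval σ) where
  pos_iff := sval_pos_iff hσ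
  le := sval_le σ
  exists_fiber _ := exists_fiber_sval hσ
  lt_between i j k hij hjk hik hi := by
    have hi' := (sval_pos_iff hσ i).1 hi
    have hk' := (sval_pos_iff hσ k).1 (hik ▸ hi)
    obtain ⟨a, rfl⟩ := exists_eq_succ_of_sval_pos hi
    obtain ⟨b, rfl⟩ := exists_eq_succ_of_sval_pos ((sval_pos_iff hσ j).2 (by omega))
    obtain ⟨c, rfl⟩ := exists_eq_succ_of_sval_pos (hik ▸ hi)
    simp only [sval_succ] at hik ⊢
    exact (mem_filter.1 hσ).2.2 a b c (by simpa using hij) (by simpa using hjk) (Fin.ext hik)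

lemma mem_stirlingSet_of_isStirlingWord_sval (h : IsStirlingWord n (sval σ)) :
    σ ∈ StirlingSet n := by
  refine mem_filter.2 ⟨mem_univ σ, fun v hv => ?_, fun i j k hij hjk hik => ?_⟩
  · obtain ⟨i, j, hij, hfiber⟩ := h.exists_fiber v (by omega) v.is_le
    obtain ⟨x, rfl⟩ := exists_eq_succ_of_sval_pos (σ := σ) (t := i)
      (by rw [(hfiber i).2 (Or.inl rfl)]; omega)
    obtain ⟨y, rfl⟩ := exists_eq_succ_of_sval_pos (σ := σ) (t := j)
      (by rw [(hfiber j).2 (Or.inr rfl)]; omega)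
    refine card_eq_two.2 ⟨x, y, by rintro rfl; exact hij.false, ?_⟩
    ext t
    simpa [sval_succ, Fin.ext_iff] using hfiber (t + 1)
  · have hlt := h.lt_between (i + 1) (j + 1) (k + 1) (by simpa using hij) (by simpa using hjk)
      (by rw [sval_succ, sval_succ, hik]) ((h.pos_iff _).2 (by omega))
    rwa [sval_succ, sval_succ] at hlt

end sval

lemma IsStirlingWord.exists_sval_eq {n : ℕ} {f : ℕ → ℕ} (h : IsStirlingWord n f) :
    ∃ σ : Fin (2 * n) → Fin (n + 1), sval σ = f := by
  refine ⟨fun i => ⟨f (i + 1), Nat.lt_succ_of_le (h.le _)⟩, ?_⟩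
  funext t
  have := h.pos_iff t
  unfold sval
  split_ifs with ht
  · simp only [Nat.sub_add_cancel ht.1]
  · omega

/-- The set `Q_n` of Stirling permutations of order `n`, in one-line notation. -/
def stirlingWords (n : ℕ) : Finset (ℕ → ℕ) :=
  (StirlingSet n).map ⟨sval, sval_injective n⟩

lemma mem_stirlingWords {n : ℕ} {f : ℕ → ℕ} : f ∈ stirlingWords n ↔ IsStirlingWord n f := by
  simp only [stirlingWords, mem_map, Function.Embedding.coeFn_mk]
  constructor
  · rintro ⟨σ, hσ, rfl⟩
    exact isStirlingWord_sval hσ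
  · intro h
    obtain ⟨σ, rfl⟩ := h.exists_sval_eq
    exact ⟨σ, mem_stirlingSet_of_isStirlingWord_sval h, rfl⟩

lemma stirlingWords_zero : stirlingWords 0 = {fun _ => 0} := by
  ext f
  rw [mem_stirlingWords, mem_singleton]
  constructor
  · exact fun h => funext fun t => Nat.le_zero.1 (h.le t)
  · rintro rfl
    exact ⟨by omega, fun _ => le_rfl, by omega, fun _ _ _ _ _ _ h => absurd h (lt_irrefl 0)⟩

/-! ### Inserting a pair of equal letters -/

/-- The new place of position `i` after two positions are inserted right behind position `p`. -/
def skipPair (p i : ℕ) : ℕ := if i ≤ p then i else i + 2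

/-- The word `f` with two adjacent copies of the letter `N` inserted right behind position `p`. -/
def insertPair (p N : ℕ) (f : ℕ → ℕ) (i : ℕ) : ℕ :=
  if i ≤ p then f i else if i ≤ p + 2 then N else f (i - 2)

section insertPair

variable {n p N : ℕ} {f g : ℕ → ℕ}

lemma skipPair_strictMono (p : ℕ) : StrictMono (skipPair p) := by
  intro i j hij
  unfold skipPair
  split_ifs <;> omega

lemma skipPair_of_le {i : ℕ} (h : i ≤ p) : skipPair p i = i := if_pos h

lemma skipPair_of_lt {i : ℕ} (h : p < i) : skipPair p i = i + 2 := if_neg h.not_ge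

lemma skipPair_ne_add_one (p i : ℕ) : skipPair p i ≠ p + 1 := by
  unfold skipPair
  split_ifs <;> omega

lemma skipPair_ne_add_two (p i : ℕ) : skipPair p i ≠ p + 2 := by
  unfold skipPair
  split_ifs <;> omega

lemma exists_skipPair_eq {t : ℕ} (h1 : t ≠ p + 1) (h2 : t ≠ p + 2) : ∃ i, t = skipPair p i := by
  rcases Nat.lt_or_ge p t with h | h
  · refine ⟨t - 2, ?_⟩
    rw [skipPair_of_lt (by omega)]
    omega
  · exact ⟨t, (skipPair_of_le h).symm⟩

lemma insertPair_skipPair (p N : ℕ) (f : ℕ → ℕ) (i : ℕ) :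
    insertPair p N f (skipPair p i) = f i := by
  rcases Nat.lt_or_ge p i with h | h
  · rw [skipPair_of_lt h, insertPair, if_neg (by omega), if_neg (by omega), Nat.add_sub_cancel]
  · rw [skipPair_of_le h, insertPair, if_pos h]

lemma insertPair_of_le {i : ℕ} (h : i ≤ p) : insertPair p N f i = f i := if_pos h

lemma insertPair_add_two_of_lt {i : ℕ} (h : p < i) : insertPair p N f (i + 2) = f i := by
  rw [← skipPair_of_lt h, insertPair_skipPair]

lemma insertPair_add_one_self (p N : ℕ) (f : ℕ → ℕ) : insertPair p N f (p + 1) = N := by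
  simp [insertPair]

lemma insertPair_add_two_self (p N : ℕ) (f : ℕ → ℕ) : insertPair p N f (p + 2) = N := by
  simp [insertPair]

lemma insertPair_eq_iff (hf : ∀ t, f t ≠ N) (t : ℕ) :
    insertPair p N f t = N ↔ t = p + 1 ∨ t = p + 2 := by
  constructor
  · intro ht
    by_contra! hne
    obtain ⟨i, rfl⟩ := exists_skipPair_eq hne.1 hne.2
    exact hf i (by rwa [insertPair_skipPair] at ht)
  · rintro (rfl | rfl)
    · exact insertPair_add_one_self p N f
    · exact insertPair_add_two_self p N f

lemma insertPair_comp_skipPair (h1 : g (p + 1) = N) (h2 : g (p + 2) = N) :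
    insertPair p N (g ∘ skipPair p) = g := by
  funext t
  by_cases ht1 : t = p + 1
  · rw [ht1, insertPair_add_one_self, h1]
  by_cases ht2 : t = p + 2
  · rw [ht2, insertPair_add_two_self, h2]
  obtain ⟨i, rfl⟩ := exists_skipPair_eq ht1 ht2
  rw [insertPair_skipPair, Function.comp_apply]

lemma insertPair_inj {q : ℕ} (hf : ∀ t, f t ≠ N) (hg : ∀ t, g t ≠ N)
    (h : insertPair p N f = insertPair q N g) : f = g ∧ p = q := by
  have hpq : p = q := by
    have hp := insertPair_eq_iff (p := q) hg (p + 1)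
    have hq := insertPair_eq_iff (p := p) hf (q + 1)
    rw [← h, insertPair_add_one_self] at hp
    rw [h, insertPair_add_one_self] at hq
    omega
  subst hpq
  refine ⟨funext fun t => ?_, rfl⟩
  rw [← insertPair_skipPair p N f, h, insertPair_skipPair]

lemma IsStirlingWord.ne_succ (h : IsStirlingWord n f) (t : ℕ) : f t ≠ n + 1 :=
  (Nat.lt_succ_of_le (h.le t)).ne

lemma isStirlingWord_insertPair (h : IsStirlingWord n f) (hp : p ≤ 2 * n) :
    IsStirlingWord (n + 1) (insertPair p (n + 1) f) where
  pos_iff t := by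
    have := h.pos_iff t
    have := h.pos_iff (t - 2)
    unfold insertPair
    split_ifs <;> omega
  le t := by
    unfold insertPair
    split_ifs
    exacts [(h.le _).trans n.le_succ, le_rfl, (h.le _).trans n.le_succ]
  exists_fiber v hv hvn := by
    rcases hvn.eq_or_lt with rfl | hvn
    · exact ⟨p + 1, p + 2, by omega, insertPair_eq_iff h.ne_succ⟩
    obtain ⟨i, j, hij, hfiber⟩ := h.exists_fiber v hv (Nat.le_of_lt_succ hvn)
    refine ⟨skipPair p i, skipPair p j, skipPair_strictMono p hij, fun t => ?_⟩
    by_cases ht : t = p + 1 ∨ t = p + 2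
    · rw [(insertPair_eq_iff h.ne_succ t).2 ht]
      have := skipPair_ne_add_one p
      have := skipPair_ne_add_two p
      grind
    · push Not at ht
      obtain ⟨s, rfl⟩ := exists_skipPair_eq ht.1 ht.2
      rw [insertPair_skipPair, hfiber, (skipPair_strictMono p).injective.eq_iff,
        (skipPair_strictMono p).injective.eq_iff]
  lt_between i j k hij hjk hik hi := by
    have hN := insertPair_eq_iff (p := p) h.ne_succ
    have hi_ne : ¬(i = p + 1 ∨ i = p + 2) := fun hmem => by
      have := (hN k).1 (hik ▸ (hN i).2 hmem)
      omega
    have hk_ne : ¬(k = p + 1 ∨ k = p + 2) := fun hmem =>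
      hi_ne ((hN i).1 (hik ▸ (hN k).2 hmem))
    push Not at hi_ne hk_ne
    obtain ⟨a, rfl⟩ := exists_skipPair_eq hi_ne.1 hi_ne.2
    obtain ⟨c, rfl⟩ := exists_skipPair_eq hk_ne.1 hk_ne.2
    simp only [insertPair_skipPair] at hik hi ⊢
    by_cases hj : j = p + 1 ∨ j = p + 2
    · rw [(hN j).2 hj]
      exact Nat.lt_succ_of_le (h.le a)
    · push Not at hj
      obtain ⟨b, rfl⟩ := exists_skipPair_eq hj.1 hj.2
      rw [insertPair_skipPair]
      exact h.lt_between a b c ((skipPair_strictMono p).lt_iff_lt.1 hij)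
        ((skipPair_strictMono p).lt_iff_lt.1 hjk) hik hi

lemma IsStirlingWord.comp_skipPair (h : IsStirlingWord (n + 1) g) (hp : p ≤ 2 * n)
    (hmax : ∀ t, g t = n + 1 ↔ t = p + 1 ∨ t = p + 2) :
    IsStirlingWord n (g ∘ skipPair p) where
  pos_iff t := by
    rw [Function.comp_apply, h.pos_iff]
    unfold skipPair
    split_ifs <;> omega
  le t := by
    have hne : g (skipPair p t) ≠ n + 1 := by
      simp [hmax, skipPair_ne_add_one, skipPair_ne_add_two]
    exact Nat.le_of_lt_succ ((h.le _).lt_of_ne hne)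
  exists_fiber v hv hvn := by
    obtain ⟨i, j, hij, hfiber⟩ := h.exists_fiber v hv (hvn.trans n.le_succ)
    have hskip : ∀ s, g s = v → ∃ a, s = skipPair p a := fun s hs =>
      exists_skipPair_eq (by rintro rfl; have := (hmax (p + 1)).2 (Or.inl rfl); omega)
        (by rintro rfl; have := (hmax (p + 2)).2 (Or.inr rfl); omega)
    obtain ⟨a, rfl⟩ := hskip i ((hfiber i).2 (Or.inl rfl))
    obtain ⟨b, rfl⟩ := hskip j ((hfiber j).2 (Or.inr rfl))
    refine ⟨a, b, (skipPair_strictMono p).lt_iff_lt.1 hij, fun t => ?_⟩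
    rw [Function.comp_apply, hfiber, (skipPair_strictMono p).injective.eq_iff,
      (skipPair_strictMono p).injective.eq_iff]
  lt_between i j k hij hjk :=
    h.lt_between _ _ _ (skipPair_strictMono p hij) (skipPair_strictMono p hjk)

lemma IsStirlingWord.exists_max_pair (h : IsStirlingWord (n + 1) g) :
    ∃ p ≤ 2 * n, ∀ t, g t = n + 1 ↔ t = p + 1 ∨ t = p + 2 := by
  obtain ⟨i, j, hij, hfiber⟩ := h.exists_fiber (n + 1) n.succ_pos le_rfl
  have hi := (hfiber i).2 (Or.inl rfl)
  have hj := (hfiber j).2 (Or.inr rfl)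
  have hadj : j = i + 1 := by
    by_contra hne
    have := h.lt_between i (i + 1) j (by omega) (by omega) (by omega) (by omega)
    have := h.le (i + 1)
    omega
  have := h.pos_iff i
  have := h.pos_iff j
  refine ⟨i - 1, by omega, fun t => ?_⟩
  rw [hfiber]
  omega

lemma IsStirlingWord.exists_insertPair_eq (h : IsStirlingWord (n + 1) g) :
    ∃ f p, IsStirlingWord n f ∧ p ≤ 2 * n ∧ insertPair p (n + 1) f = g := by
  obtain ⟨p, hp, hmax⟩ := h.exists_max_pair
  exact ⟨g ∘ skipPair p, p, h.comp_skipPair hp hmax, hp,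
    insertPair_comp_skipPair ((hmax _).2 (Or.inl rfl)) ((hmax _).2 (Or.inr rfl))⟩

lemma sum_stirlingWords_succ {M : Type*} [AddCommMonoid M] (n : ℕ) (F : (ℕ → ℕ) → M) :
    ∑ g ∈ stirlingWords (n + 1), F g =
      ∑ f ∈ stirlingWords n, ∑ p ∈ range (2 * n + 1), F (insertPair p (n + 1) f) := by
  rw [← sum_product']
  symm
  refine sum_bij (fun x _ => insertPair x.2 (n + 1) x.1) ?_ ?_ ?_ (fun _ _ => rfl)
  · rintro ⟨f, p⟩ hfp
    simp only [mem_product, mem_stirlingWords, mem_range] at hfp ⊢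
    exact isStirlingWord_insertPair hfp.1 (Nat.le_of_lt_succ hfp.2)
  · rintro ⟨f, p⟩ hfp ⟨g, q⟩ hgq heq
    simp only [mem_product, mem_stirlingWords] at hfp hgq
    exact Prod.ext_iff.2 (insertPair_inj hfp.1.ne_succ hgq.1.ne_succ heq)
  · intro g hg
    obtain ⟨f, p, hf, hp, rfl⟩ := (mem_stirlingWords.1 hg).exists_insertPair_eq
    refine ⟨(f, p), ?_, rfl⟩
    simp only [mem_product, mem_stirlingWords, mem_range]
    exact ⟨hf, Nat.lt_succ_of_le hp⟩

end insertPair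

/-! ### Statistics on windows of three letters -/

/-- The three consecutive letters of `f` around position `i`. For `i = 0` the truncated
subtraction repeats the padding `f 0`. -/
def window (f : ℕ → ℕ) (i : ℕ) : ℕ × ℕ × ℕ := (f (i - 1), f i, f (i + 1))

/-- The total weight of the windows of a word of length `m`. The windows around the padding
positions `0` and `m + 1` are included, so that every slot of the word lies between the centres
of two windows of the sum. -/
def windowSum (T : ℕ × ℕ × ℕ → ℤ) (m : ℕ) (f : ℕ → ℕ) : ℤ :=
  ∑ i ∈ range (m + 2), T (window f i)

section windowSum

variable {T : ℕ × ℕ × ℕ → ℤ} {m p N : ℕ} {f : ℕ → ℕ}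

lemma window_insertPair_of_lt {i : ℕ} (h : i < p) :
    window (insertPair p N f) i = window f i := by
  simp only [window, insertPair_of_le h.le, insertPair_of_le (Nat.succ_le_of_lt h),
    insertPair_of_le ((i.sub_le 1).trans h.le)]

lemma window_insertPair_add_two_of_lt {i : ℕ} (h : p + 1 < i) :
    window (insertPair p N f) (i + 2) = window f i := by
  have hpred : i + 2 - 1 = i - 1 + 2 := by omega
  have hsucc : i + 2 + 1 = i + 1 + 2 := by omega
  simp only [window, hpred, hsucc]
  rw [insertPair_add_two_of_lt (by omega), insertPair_add_two_of_lt (by omega),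
    insertPair_add_two_of_lt (by omega)]

lemma windowSum_insertPair (T : ℕ × ℕ × ℕ → ℤ) (N : ℕ) (f : ℕ → ℕ) (hp : p ≤ m) :
    windowSum T (m + 2) (insertPair p N f) =
      windowSum T m f - T (window f p) - T (window f (p + 1)) +
        (T (f (p - 1), f p, N) + T (f p, N, N) + T (N, N, f (p + 1)) +
          T (N, f (p + 1), f (p + 2))) := by
  obtain ⟨r, rfl⟩ := Nat.exists_eq_add_of_le hp
  have hlow : ∑ i ∈ range p, T (window (insertPair p N f) i) = ∑ i ∈ range p, T (window f i) :=
    sum_congr rfl fun i hi => by rw [window_insertPair_of_lt (mem_range.1 hi)]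
  have hhigh : ∑ i ∈ range r, T (window (insertPair p N f) (p + 4 + i)) =
      ∑ i ∈ range r, T (window f (p + 2 + i)) := by
    refine sum_congr rfl fun i _ => ?_
    rw [show p + 4 + i = p + 2 + i + 2 by ring, window_insertPair_add_two_of_lt (by omega)]
  have hnew : T (window (insertPair p N f) p) = T (f (p - 1), f p, N) ∧
      T (window (insertPair p N f) (p + 1)) = T (f p, N, N) ∧
      T (window (insertPair p N f) (p + 2)) = T (N, N, f (p + 1)) ∧
      T (window (insertPair p N f) (p + 3)) = T (N, f (p + 1), f (p + 2)) := by
    simp [window, insertPair]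
  have hsplit : windowSum T (p + r) f = ∑ i ∈ range p, T (window f i) + T (window f p) +
      T (window f (p + 1)) + ∑ i ∈ range r, T (window f (p + 2 + i)) := by
    rw [windowSum, show p + r + 2 = p + 2 + r by ring, sum_range_add, sum_range_succ,
      sum_range_succ]
  rw [hsplit, windowSum, show p + r + 2 + 2 = p + 4 + r by ring, sum_range_add]
  simp only [sum_range_succ, hlow, hhigh, hnew]
  ring

lemma sum_window_of_last_eq_zero (h : T (window f (m + 1)) = 0) :
    ∑ p ∈ range (m + 1), T (window f p) = windowSum T m f := by
  rw [windowSum, sum_range_succ _ (m + 1), h, add_zero]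

lemma sum_window_succ_of_first_eq_zero (h : T (window f 0) = 0) :
    ∑ p ∈ range (m + 1), T (window f (p + 1)) = windowSum T m f := by
  rw [windowSum, sum_range_succ' _ (m + 1), h, add_zero]

end windowSum

/-- The indicator of a left ascent-plateau in the middle of a window. -/
def lapInd : ℕ × ℕ × ℕ → ℤ := fun (a, b, c) => if a < b ∧ b = c then 1 else 0

/-- The indicator of a double ascent in the middle of a window. -/
def dascInd : ℕ × ℕ × ℕ → ℤ := fun (a, b, c) => if a < b ∧ b < c then 1 else 0

/-- The indicator of a descent-plateau in the middle of a window. The condition `0 < b` discards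
the window `(σ_{2n}, 0, 0)` around the padding behind the last letter. -/
def dpInd : ℕ × ℕ × ℕ → ℤ := fun (a, b, c) => if 0 < b ∧ b < a ∧ b = c then 1 else 0

/-- The number `lap` of left ascent-plateaus of a word of length `2n`. -/
def lapCount (n : ℕ) (f : ℕ → ℕ) : ℤ := windowSum lapInd (2 * n) f

/-- The number `dasc` of double ascents of a word of length `2n`. -/
def dascCount (n : ℕ) (f : ℕ → ℕ) : ℤ := windowSum dascInd (2 * n) f

/-- The number `dp` of descent-plateaus of a word of length `2n`. -/
def dpCount (n : ℕ) (f : ℕ → ℕ) : ℤ := windowSum dpInd (2 * n) f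

lemma dpCount_nonneg (n : ℕ) (f : ℕ → ℕ) : 0 ≤ dpCount n f := by
  have hdpInd : ∀ w, 0 ≤ dpInd w := by
    rintro ⟨a, b, c⟩
    simp only [dpInd]
    split_ifs <;> norm_num
  rw [dpCount, windowSum]
  exact sum_nonneg fun i _ => hdpInd (window f i)

section sval

variable {n : ℕ} {σ : Fin (2 * n) → Fin (n + 1)}

lemma card_filter_Icc_eq_sum_range {P : ℕ → Prop} [DecidablePred P] {a b m : ℕ} (hbm : b < m)
    (hP : ∀ i, P i → i ∈ Icc a b) :
    (#{i ∈ Icc a b | P i} : ℤ) = ∑ i ∈ range m, if P i then 1 else 0 := by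
  rw [sum_boole]
  congr 2
  ext i
  simp only [mem_filter, mem_range]
  exact ⟨fun h => ⟨(mem_Icc.1 h.1).2.trans_lt hbm, h.2⟩, fun h => ⟨hP i h.2, h.2⟩⟩

lemma IsStirlingWord.mem_Icc_of_pos_of_le {f : ℕ → ℕ} (h : IsStirlingWord n f) {i : ℕ}
    (hi : 0 < f i) (hle : f i ≤ f (i + 1)) : i ∈ Icc 1 (2 * n - 1) := by
  have := (h.pos_iff i).1 hi
  have := (h.pos_iff (i + 1)).1 (hi.trans_le hle)
  rw [mem_Icc]
  omega

lemma lapQ_eq_lapCount (hσ : σ ∈ StirlingSet n) : (lapQ σ : ℤ) = lapCount n (sval σ) :=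
  card_filter_Icc_eq_sum_range (by omega) fun _ hi =>
    (isStirlingWord_sval hσ).mem_Icc_of_pos_of_le hi.1.pos hi.2.le

lemma dascQ_eq_dascCount (hσ : σ ∈ StirlingSet n) : (dascQ σ : ℤ) = dascCount n (sval σ) :=
  card_filter_Icc_eq_sum_range (by omega) fun _ hi =>
    (isStirlingWord_sval hσ).mem_Icc_of_pos_of_le hi.1.pos hi.2.le

lemma dpQ_eq_dpCount (hσ : σ ∈ StirlingSet n) : (dpQ σ : ℤ) = dpCount n (sval σ) := by
  have hpos : dpQ σ = #{i ∈ Icc 2 (2 * n - 1) | 0 < sval σ i ∧ sval σ i < sval σ (i - 1) ∧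
      sval σ i = sval σ (i + 1)} := by
    refine congrArg card (filter_congr fun i hi => ?_)
    have := sval_pos_iff hσ i
    rw [mem_Icc] at hi
    omega
  rw [hpos]
  refine card_filter_Icc_eq_sum_range (by omega) fun i hi => ?_
  have := mem_Icc.1 ((isStirlingWord_sval hσ).mem_Icc_of_pos_of_le hi.1 hi.2.2.le)
  have := (sval_pos_iff hσ (i - 1)).1 hi.2.1.pos
  rw [mem_Icc]
  omega

end sval

/-! ### The effect of an insertion on the statistics -/

section statistics

variable {n p : ℕ} {f : ℕ → ℕ}

lemma IsStirlingWord.le_succ_of_pred_lt (h : IsStirlingWord n f) {i : ℕ}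
    (hi : f (i - 1) < f i) : f i ≤ f (i + 1) := by
  obtain ⟨a, b, hab, hfiber⟩ := h.exists_fiber (f i) hi.pos (h.le i)
  have ha := (hfiber a).2 (Or.inl rfl)
  have hb := (hfiber b).2 (Or.inr rfl)
  rcases (hfiber i).1 rfl with rfl | rfl
  · rcases Nat.lt_or_ge (i + 1) b with hlt | hge
    · exact (h.lt_between i (i + 1) b (by omega) hlt hb.symm hi.pos).le
    · obtain rfl : b = i + 1 := by omega
      exact hb.ge
  · rcases Nat.lt_or_ge a (i - 1) with hlt | hge
    · have := h.lt_between a (i - 1) i hlt (by omega) ha (by omega)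
      omega
    · obtain rfl : a = i - 1 := by omega
      omega

lemma IsStirlingWord.not_constant_window (h : IsStirlingWord n f) {i : ℕ} (hi : 0 < f i) :
    ¬(f (i - 1) = f i ∧ f i = f (i + 1)) := by
  rintro ⟨hpred, hsucc⟩
  obtain ⟨a, b, -, hfiber⟩ := h.exists_fiber (f i) hi (h.le i)
  have := (h.pos_iff i).1 hi
  have := (hfiber i).1 rfl
  have := (hfiber (i - 1)).1 hpred
  have := (hfiber (i + 1)).1 hsucc.symm
  omega

lemma lapCount_insertPair (h : ∀ t, f t ≤ n) (hp : p ≤ 2 * n) :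
    lapCount (n + 1) (insertPair p (n + 1) f) =
      lapCount n f + 1 - lapInd (window f p) - lapInd (window f (p + 1)) := by
  have h0 := h p
  have h1 := h (p + 1)
  have hnew : lapInd (f (p - 1), f p, n + 1) + lapInd (f p, n + 1, n + 1) +
      lapInd (n + 1, n + 1, f (p + 1)) + lapInd (n + 1, f (p + 1), f (p + 2)) = 1 := by
    simp only [lapInd]
    grind
  rw [lapCount, show 2 * (n + 1) = 2 * n + 2 by ring, windowSum_insertPair _ _ _ hp, hnew,
    lapCount]
  ring

lemma dascCount_insertPair (h : IsStirlingWord n f) (hp : p ≤ 2 * n) :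
    dascCount (n + 1) (insertPair p (n + 1) f) =
      dascCount n f + lapInd (window f p) - dascInd (window f (p + 1)) := by
  have h0 := h.le p
  have h1 := h.le (p + 1)
  have hascent := h.le_succ_of_pred_lt (i := p)
  have hnew : dascInd (f (p - 1), f p, n + 1) + dascInd (f p, n + 1, n + 1) +
      dascInd (n + 1, n + 1, f (p + 1)) + dascInd (n + 1, f (p + 1), f (p + 2)) =
      lapInd (window f p) + dascInd (window f p) := by
    simp only [lapInd, dascInd, window]
    grind
  rw [dascCount, show 2 * (n + 1) = 2 * n + 2 by ring, windowSum_insertPair _ _ _ hp, hnew,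
    dascCount]
  ring

lemma dpCount_insertPair (h : IsStirlingWord n f) (hp : p ≤ 2 * n) :
    dpCount (n + 1) (insertPair p (n + 1) f) =
      dpCount n f - dpInd (window f p) + lapInd (window f (p + 1)) := by
  have h0 := h.le p
  have h1 := h.le (p + 1)
  have hconst := h.not_constant_window (i := p + 1)
  have hnew : dpInd (f (p - 1), f p, n + 1) + dpInd (f p, n + 1, n + 1) +
      dpInd (n + 1, n + 1, f (p + 1)) + dpInd (n + 1, f (p + 1), f (p + 2)) =
      lapInd (window f (p + 1)) + dpInd (window f (p + 1)) := by
    simp only [lapInd, dpInd, window]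
    grind
  rw [dpCount, show 2 * (n + 1) = 2 * n + 2 by ring, windowSum_insertPair _ _ _ hp, hnew,
    dpCount]
  ring

lemma slot_indicators_mem (f : ℕ → ℕ) (p : ℕ) :
    (lapInd (window f (p + 1)), lapInd (window f p), dascInd (window f (p + 1)),
        dpInd (window f p)) ∈
      ({(1, 0, 0, 0), (0, 1, 0, 0), (0, 0, 1, 0), (0, 0, 0, 1), (0, 0, 0, 0)} :
        Set (ℤ × ℤ × ℤ × ℤ)) := by
  simp only [lapInd, dascInd, dpInd, window, Nat.add_sub_cancel]
  grind

lemma apply_statistics_insertPair (h : IsStirlingWord n f) (hp : p ≤ 2 * n)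
    (G : ℤ → ℤ → ℤ → ℤ) :
    G (lapCount (n + 1) (insertPair p (n + 1) f)) (dascCount (n + 1) (insertPair p (n + 1) f))
        (dpCount (n + 1) (insertPair p (n + 1) f)) =
      lapInd (window f (p + 1)) * G (lapCount n f) (dascCount n f) (dpCount n f + 1) +
      lapInd (window f p) * G (lapCount n f) (dascCount n f + 1) (dpCount n f) +
      dascInd (window f (p + 1)) * G (lapCount n f + 1) (dascCount n f - 1) (dpCount n f) +
      dpInd (window f p) * G (lapCount n f + 1) (dascCount n f) (dpCount n f - 1) +
      (1 - lapInd (window f (p + 1)) - lapInd (window f p) - dascInd (window f (p + 1)) -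
        dpInd (window f p)) * G (lapCount n f + 1) (dascCount n f) (dpCount n f) := by
  rw [lapCount_insertPair h.le hp, dascCount_insertPair h hp, dpCount_insertPair h hp]
  have hslot := slot_indicators_mem f p
  simp only [Set.mem_insert_iff, Set.mem_singleton_iff, Prod.mk.injEq] at hslot
  rcases hslot with hslot | hslot | hslot | hslot | hslot <;> simp [hslot]

lemma sum_apply_statistics_insertPair (h : IsStirlingWord n f) (G : ℤ → ℤ → ℤ → ℤ) :
    ∑ p ∈ range (2 * n + 1), G (lapCount (n + 1) (insertPair p (n + 1) f))
        (dascCount (n + 1) (insertPair p (n + 1) f)) (dpCount (n + 1) (insertPair p (n + 1) f)) =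
      lapCount n f * G (lapCount n f) (dascCount n f) (dpCount n f + 1) +
      lapCount n f * G (lapCount n f) (dascCount n f + 1) (dpCount n f) +
      dascCount n f * G (lapCount n f + 1) (dascCount n f - 1) (dpCount n f) +
      dpCount n f * G (lapCount n f + 1) (dascCount n f) (dpCount n f - 1) +
      (2 * n + 1 - 2 * lapCount n f - dascCount n f - dpCount n f) *
        G (lapCount n f + 1) (dascCount n f) (dpCount n f) := by
  have hlast : f (2 * n + 1) = 0 := by
    have := h.pos_iff (2 * n + 1)
    omega
  have hlap_succ : ∑ p ∈ range (2 * n + 1), lapInd (window f (p + 1)) = lapCount n f :=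
    sum_window_succ_of_first_eq_zero (by simp [lapInd, window])
  have hlap : ∑ p ∈ range (2 * n + 1), lapInd (window f p) = lapCount n f :=
    sum_window_of_last_eq_zero (by simp [lapInd, window, hlast])
  have hdasc : ∑ p ∈ range (2 * n + 1), dascInd (window f (p + 1)) = dascCount n f :=
    sum_window_succ_of_first_eq_zero (by simp [dascInd, window])
  have hdp : ∑ p ∈ range (2 * n + 1), dpInd (window f p) = dpCount n f :=
    sum_window_of_last_eq_zero (by simp [dpInd, window, hlast])
  rw [sum_congr rfl fun p hp =>
    apply_statistics_insertPair h (Nat.le_of_lt_succ (mem_range.1 hp)) G]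
  simp only [sum_add_distrib, ← sum_mul, sum_sub_distrib, hlap_succ, hlap, hdasc, hdp, sum_const,
    card_range, nsmul_eq_mul]
  push_cast
  ring

end statistics

/-! ### The joint distribution -/

/-- The number of Stirling permutations of order `n` with `lap = i`, `dasc = j` and `dp = k`. -/
def stirlingCount (n : ℕ) (i j k : ℤ) : ℤ :=
  #{f ∈ stirlingWords n | lapCount n f = i ∧ dascCount n f = j ∧ dpCount n f = k}

lemma stirlingCount_eq_sum (n : ℕ) (i j k : ℤ) :
    stirlingCount n i j k = ∑ f ∈ stirlingWords n,
      if lapCount n f = i ∧ dascCount n f = j ∧ dpCount n f = k then 1 else 0 := by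
  rw [stirlingCount, sum_boole]

theorem stirlingCount_succ (n : ℕ) (i j k : ℤ) :
    stirlingCount (n + 1) i j k =
      i * stirlingCount n i j (k - 1) + i * stirlingCount n i (j - 1) k +
        (j + 1) * stirlingCount n (i - 1) (j + 1) k +
        (k + 1) * stirlingCount n (i - 1) j (k + 1) +
        (2 * n + 3 - 2 * i - j - k) * stirlingCount n (i - 1) j k := by
  simp only [stirlingCount_eq_sum, sum_stirlingWords_succ, mul_sum, ← sum_add_distrib]
  refine sum_congr rfl fun f hf => ?_
  rw [sum_apply_statistics_insertPair (mem_stirlingWords.1 hf)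
    fun a b c => if a = i ∧ b = j ∧ c = k then 1 else 0]
  have mul_ite_congr {P Q : Prop} [Decidable P] [Decidable Q] {a b : ℤ} (hPQ : P ↔ Q)
      (hab : Q → a = b) : a * (if P then 1 else 0) = b * (if Q then 1 else 0) := by
    grind
  refine congrArg₂ _ (congrArg₂ _ (congrArg₂ _ (congrArg₂ _ ?_ ?_) ?_) ?_) ?_ <;>
    exact mul_ite_congr (by omega) (by omega)

lemma stirlingCount_zero (i j k : ℤ) :
    stirlingCount 0 i j k = if i = 0 ∧ j = 0 ∧ k = 0 then 1 else 0 := by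
  have hlap : lapCount 0 (fun _ => 0) = 0 := by simp [lapCount, windowSum, window, lapInd]
  have hdasc : dascCount 0 (fun _ => 0) = 0 := by simp [dascCount, windowSum, window, dascInd]
  have hdp : dpCount 0 (fun _ => 0) = 0 := by simp [dpCount, windowSum, window, dpInd]
  rw [stirlingCount_eq_sum, stirlingWords_zero, sum_singleton, hlap, hdasc, hdp]
  simp only [eq_comm]

lemma stirlingCount_eq_zero_of_neg (n : ℕ) (i j : ℤ) {k : ℤ} (hk : k < 0) :
    stirlingCount n i j k = 0 := by
  rw [stirlingCount, Nat.cast_eq_zero, card_eq_zero, filter_eq_empty_iff]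
  rintro f - ⟨-, -, hdp⟩
  exact hk.not_ge (hdp ▸ dpCount_nonneg n f)

theorem stirlingCount_exchange (n : ℕ) (i j k : ℤ) :
    (k + 1) * stirlingCount n i j (k + 1) = (j + 1) * stirlingCount n i (j + 1) k := by
  induction n generalizing i j k with
  | zero =>
    simp only [stirlingCount_zero]
    split_ifs <;> grind
  | succ n ih =>
    have hj := ih i (j - 1) k
    have hk := ih i j (k - 1)
    have hik := ih (i - 1) j (k + 1)
    have hij := ih (i - 1) (j + 1) k
    have hi := ih (i - 1) j k
    rw [stirlingCount_succ, stirlingCount_succ]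
    simp only [sub_add_cancel, add_sub_cancel_right] at *
    linear_combination i * hj + i * hk + (k + 1) * hik + (j + 1) * hij +
      (2 * (n : ℤ) + 3 - 2 * i - j - k - 1) * hi

theorem stirlingCount_succ_zero_right (n : ℕ) (i j : ℤ) :
    stirlingCount (n + 1) i j 0 =
      i * stirlingCount n i (j - 1) 0 + 2 * (j + 1) * stirlingCount n (i - 1) (j + 1) 0 +
        (2 * n + 3 - 2 * i - j) * stirlingCount n (i - 1) j 0 := by
  have hneg := stirlingCount_eq_zero_of_neg n i j (k := 0 - 1) (by norm_num)
  have hexchange := stirlingCount_exchange n (i - 1) j 0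
  rw [stirlingCount_succ, hneg]
  linear_combination hexchange

lemma stirlingCount_one_zero_right (i j : ℤ) :
    stirlingCount 1 i j 0 = if (i, j) = (1, 0) then 1 else 0 := by
  rw [stirlingCount_succ_zero_right]
  simp only [stirlingCount_zero]
  grind

lemma stirlingCount_eq_card_stirlingSet (n : ℕ) (i j : ℤ) :
    stirlingCount n i j 0 =
      #{σ ∈ StirlingSet n | (lapQ σ : ℤ) = i ∧ (dascQ σ : ℤ) = j ∧ dpQ σ = 0} := by
  rw [stirlingCount, stirlingWords, filter_map, card_map]
  refine congrArg (fun s => (#s : ℤ)) (filter_congr fun σ hσ => ?_)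
  simp only [Function.comp_apply, Function.Embedding.coeFn_mk]
  rw [← lapQ_eq_lapCount hσ, ← dascQ_eq_dascCount hσ, ← dpQ_eq_dpCount hσ, Nat.cast_eq_zero]

lemma gammaZ_eq_stirlingCount (n : ℕ) (i j : ℤ) : gammaZ n i j = stirlingCount n i j 0 := by
  rw [stirlingCount_eq_card_stirlingSet, gammaZ]
  split_ifs with hij
  · rfl
  · symm
    rw [Nat.cast_eq_zero, card_eq_zero, filter_eq_empty_iff]
    omega

theorem statement_17 :
    (∀ n : ℕ, 1 ≤ n → ∀ i j : ℤ, 0 ≤ i → 0 ≤ j →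
        gammaZ (n + 1) i j =
          i * gammaZ n i (j - 1) + 2 * (j + 1) * gammaZ n (i - 1) (j + 1) +
            (2 * (n : ℤ) + 3 - 2 * i - j) * gammaZ n (i - 1) j) ∧
    gammaZ 1 1 0 = 1 ∧ ∀ i j : ℤ, (i, j) ≠ (1, 0) → gammaZ 1 i j = 0 := by
  simp only [gammaZ_eq_stirlingCount]
  refine ⟨fun n _ i j _ _ => stirlingCount_succ_zero_right n i j, ?_, fun i j hij => ?_⟩
  · rw [stirlingCount_one_zero_right, if_pos rfl]
  · rw [stirlingCount_one_zero_right, if_neg hij]
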